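/- arXiv:2409.07216 — 2 statements merged into one kernel-verified Lean document; each statement's English description precedes it below -/
import Mathlib

section
/- No family of 6 permutations of $\{1,2,3,4,5\}$ shatters 9 or more of the 10 three-element subsets of $\{1,2,3,4,5\}$, and the family $\{12345, 35241, 41523, 25143, 53142, 43215\}$ shatters exactly 8 triples. Hence the maximum number of triples of $[5]$ shattered by 6 permutations is 8. -/
/-!
Suppose at most one triple `T` is not shattered by `P 0, …, P 5`, and let `q i = (P i)⁻¹` send an
element to its position. Any other triple has six relative orders and there are six permutations,
so each order occurs exactly once: two different `q i`, `q j` induce different orders on every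
triple other than `T`. Relabelling the ground set by `P 0` makes `q 0` the identity and preserves
this property. Encode a permutation by the set of ordered triples `(u, v, w)` that it arranges
increasingly, leaving out the orderings of `T`. Six permutations as above then give six pairwise
disjoint sets, so `q 1, …, q 5` would be a 5-clique in the disjointness graph on the codes
disjoint from the code of the identity. For each `T`, an exhaustive search of this small graph
(`search`) finds no 5-clique. The codes are bit masks, so disjointness is the vanishing of a
bitwise `and`, which the kernel evaluates quickly.
-/

open Finset

/-- A family of permutations shatters a set `X` if every relative order of any
three distinct elements of `X` occurs in some member of the family. -/
def ShattersTriples {n : ℕ} (P : Fin 6 → Equiv.Perm (Fin n)) (X : Finset (Fin n)) : Prop :=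
  ∀ u ∈ X, ∀ v ∈ X, ∀ w ∈ X, u ≠ v → v ≠ w → u ≠ w →
    ∃ i : Fin 6, (P i).symm u < (P i).symm v ∧ (P i).symm v < (P i).symm w

instance {n : ℕ} (P : Fin 6 → Equiv.Perm (Fin n)) (X : Finset (Fin n)) :
    Decidable (ShattersTriples P X) := by unfold ShattersTriples; infer_instance

/-- The number of 3-subsets shattered by the family `P`. -/
def shatteredCount {n : ℕ} (P : Fin 6 → Equiv.Perm (Fin n)) : ℕ :=
  ((Finset.univ.powersetCard 3).filter (ShattersTriples P)).card

/-- 12345 -/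
def p₀ : Equiv.Perm (Fin 5) := Equiv.refl _
/-- 35241 -/
def p₁ : Equiv.Perm (Fin 5) := ⟨![2,4,1,3,0], ![4,2,0,3,1], by decide, by decide⟩
/-- 41523 -/
def p₂ : Equiv.Perm (Fin 5) := ⟨![3,0,4,1,2], ![1,3,4,0,2], by decide, by decide⟩
/-- 25143 -/
def p₃ : Equiv.Perm (Fin 5) := ⟨![1,4,0,3,2], ![2,0,4,3,1], by decide, by decide⟩
/-- 53142 -/
def p₄ : Equiv.Perm (Fin 5) := ⟨![4,2,0,3,1], ![2,4,1,3,0], by decide, by decide⟩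
/-- 43215 -/
def p₅ : Equiv.Perm (Fin 5) := ⟨![3,2,1,0,4], ![3,2,1,0,4], by decide, by decide⟩

/-- The first entry of the ordered triple with index `k = 25 * u + 5 * v + w`. -/
def fstEntry (k : ℕ) : Fin 5 := Fin.ofNat 5 (k / 25)

/-- The second entry of the ordered triple with index `k = 25 * u + 5 * v + w`. -/
def sndEntry (k : ℕ) : Fin 5 := Fin.ofNat 5 (k / 5)

/-- The third entry of the ordered triple with index `k = 25 * u + 5 * v + w`. -/
def thdEntry (k : ℕ) : Fin 5 := Fin.ofNat 5 k

/-- The set of ordered triples `(u, v, w)` with `f u < f v < f w`, as a bit mask. -/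
def orderMask (f : Fin 5 → ℕ) : ℕ :=
  Nat.ofBits fun k : Fin 125 =>
    decide (f (fstEntry k) < f (sndEntry k)) && decide (f (sndEntry k) < f (thdEntry k))

/-- The set of ordered triples that do not enumerate `T`, as a bit mask. -/
def offMask (T : Finset (Fin 5)) : ℕ :=
  Nat.ofBits fun k : Fin 125 => decide ({fstEntry k, sndEntry k, thdEntry k} ≠ T)

/-- The order masks of all permutations of `Fin 5`. -/
def permMasks : List ℕ :=
  (List.permutations' [0, 1, 2, 3, 4]).map fun l => orderMask fun i => l.getD i 0

/-- Whether `p` holds of the members of the list disjoint from and following `a`, for every member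
`a` of the list of masks. -/
def allExtensions (p : List ℕ → Bool) : List ℕ → Bool
  | [] => true
  | a :: l => p (l.filter fun b => Nat.beq (Nat.land a b) 0) && allExtensions p l

/-- Exhaustive search, returning `true` if no `k` members of the list of masks are pairwise
disjoint. -/
def noClique : ℕ → List ℕ → Bool
  | 0 => fun _ => false
  | k + 1 => allExtensions (noClique k)

/-- The masks of permutations, with the orderings of `T` left out, that are disjoint from that of
the identity. -/
def candidates (T : Finset (Fin 5)) : List ℕ :=
  (permMasks.map fun m => Nat.land m (offMask T)).filter
    fun m => Nat.beq (Nat.land (orderMask fun i => i) m) 0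

theorem search : ∀ T : Finset (Fin 5), noClique 5 (candidates T) = true := by
  decide +kernel

theorem noClique_sound (k : ℕ) (l : List ℕ) (h : noClique k l = true) (s : Finset ℕ)
    (hs : ∀ a ∈ s, a ∈ l) (hcard : s.card = k)
    (hdisj : ∀ a ∈ s, ∀ b ∈ s, a ≠ b → a &&& b = 0) : False := by
  induction k generalizing l s with
  | zero => simp [noClique] at h
  | succ k ih₁ =>
  induction l generalizing s with
  | nil =>
    have : s = ∅ := Finset.eq_empty_of_forall_notMem fun a ha => by simpa using hs a ha
    simp [this] at hcard
  | cons a l ih₂ =>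
    simp only [noClique, allExtensions, Bool.and_eq_true] at h
    by_cases ha : a ∈ s
    · refine ih₁ _ h.1 (s.erase a) (fun b hb => ?_) (by rw [Finset.card_erase_of_mem ha]; omega) ?_
      · have hb' := Finset.mem_erase.1 hb
        have := hs b hb'.2
        rw [List.mem_filter]
        refine ⟨by simpa [hb'.1] using this, ?_⟩
        rw [Nat.beq_eq]
        exact hdisj a ha b hb'.2 hb'.1.symm
      · exact fun b hb c hc => hdisj b (Finset.mem_of_mem_erase hb) c (Finset.mem_of_mem_erase hc)
    · refine ih₂ h.2 s (fun b hb => ?_) hcard hdisj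
      have hne : b ≠ a := fun e => ha (e ▸ hb)
      simpa [hne] using hs b hb

theorem orderMask_mem_permMasks (σ : Equiv.Perm (Fin 5)) :
    orderMask (fun i => (σ i : ℕ)) ∈ permMasks := by
  refine List.mem_map.2 ⟨(List.finRange 5).map fun i => (σ i : ℕ), ?_, ?_⟩
  · rw [List.mem_permutations']
    have := (Equiv.Perm.map_finRange_perm σ).map (fun i : Fin 5 => (i : ℕ))
    rw [List.map_map] at this
    exact this
  · congr 1
    ext i
    fin_cases i <;> rfl

theorem testBit_mask (f : Fin 5 → ℕ) (T : Finset (Fin 5)) (k : ℕ) :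
    (orderMask f &&& offMask T).testBit k = true ↔ k < 125 ∧
      (f (fstEntry k) < f (sndEntry k) ∧ f (sndEntry k) < f (thdEntry k)) ∧
        {fstEntry k, sndEntry k, thdEntry k} ≠ T := by
  by_cases hk : k < 125
  · simp [orderMask, offMask, Nat.testBit_ofBits_lt, hk]
  · simp [orderMask, offMask, Nat.testBit_ofBits_ge, hk, Nat.le_of_not_lt hk]

/-- If six permutations realise all six orders of a triple, then no order is realised
twice. -/
theorem unique_order (q : Fin 6 → Equiv.Perm (Fin 5)) (u v w : Fin 5)
    (h : ∀ a ∈ ({u, v, w} : Finset (Fin 5)), ∀ b ∈ ({u, v, w} : Finset (Fin 5)),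
      ∀ c ∈ ({u, v, w} : Finset (Fin 5)), a ≠ b → b ≠ c → a ≠ c →
        ∃ i, q i a < q i b ∧ q i b < q i c)
    (huv : u ≠ v) (hvw : v ≠ w) (huw : u ≠ w) (i j : Fin 6)
    (hi : q i u < q i v ∧ q i v < q i w) (hj : q j u < q j v ∧ q j v < q j w) : i = j := by
  obtain ⟨a, ha⟩ := h u (by simp) w (by simp) v (by simp) huw hvw.symm huv
  obtain ⟨b, hb⟩ := h v (by simp) u (by simp) w (by simp) huv.symm huw hvw
  obtain ⟨c, hc⟩ := h v (by simp) w (by simp) u (by simp) hvw huw.symm huv.symm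
  obtain ⟨d, hd⟩ := h w (by simp) u (by simp) v (by simp) huw.symm huv hvw.symm
  obtain ⟨e, he⟩ := h w (by simp) v (by simp) u (by simp) hvw.symm huv.symm huw.symm
  -- Otherwise `i, j` and the witnesses for the other five orders are seven elements of `Fin 6`.
  by_contra hij
  have hnd : [i, j, a, b, c, d, e].Nodup := by
    simp only [List.nodup_cons, List.mem_cons, List.not_mem_nil, or_false, not_or,
      not_false_eq_true, List.nodup_nil, and_true]
    refine ⟨⟨hij, ?_, ?_, ?_, ?_, ?_⟩, ⟨?_, ?_, ?_, ?_, ?_⟩, ⟨?_, ?_, ?_, ?_⟩, ⟨?_, ?_, ?_⟩,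
      ⟨?_, ?_⟩, ?_⟩ <;> (rintro rfl; order)
  simpa using hnd.length_le_card

/-- No six permutations of which the first is the identity shatter every triple other than `T`;
here `q i` sends an element to its position. -/
theorem no_family (q : Fin 6 → Equiv.Perm (Fin 5)) (hq : q 0 = 1) (T : Finset (Fin 5))
    (h : ∀ X : Finset (Fin 5), X.card = 3 → X ≠ T → ∀ a ∈ X, ∀ b ∈ X, ∀ c ∈ X,
      a ≠ b → b ≠ c → a ≠ c → ∃ i, q i a < q i b ∧ q i b < q i c) : False := by
  set m : Fin 6 → ℕ := fun i => orderMask (fun x => (q i x : ℕ)) &&& offMask T with hm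
  have hdisj : ∀ i j, i ≠ j → m i &&& m j = 0 := by
    intro i j hij
    refine Nat.eq_of_testBit_eq fun k => ?_
    rw [Nat.zero_testBit, Nat.testBit_land, Bool.and_eq_false_iff]
    by_contra hcon
    simp only [not_or, Bool.not_eq_false] at hcon
    obtain ⟨-, ⟨hi₁, hi₂⟩, hT⟩ := (testBit_mask _ T k).1 hcon.1
    obtain ⟨-, ⟨hj₁, hj₂⟩, -⟩ := (testBit_mask _ T k).1 hcon.2
    have huv : fstEntry k ≠ sndEntry k := fun e => by simp [e] at hi₁
    have hvw : sndEntry k ≠ thdEntry k := fun e => by simp [e] at hi₂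
    have huw : fstEntry k ≠ thdEntry k := fun e => by rw [e] at hi₁; omega
    exact hij (unique_order q _ _ _
      (h _ (Finset.card_eq_three.2 ⟨_, _, _, huv, huw, hvw, rfl⟩) hT)
      huv hvw huw i j ⟨hi₁, hi₂⟩ ⟨hj₁, hj₂⟩)
  -- A mask is nonzero, since `T` equals at most one of the triples at positions `0,1,2` and `0,1,3`.
  have hne : ∀ i, m i ≠ 0 := by
    intro i h0
    have key : ∀ u v w : Fin 5, q i u < q i v → q i v < q i w → {u, v, w} = T := by
      intro u v w h₁ h₂
      by_contra hT
      have e₁ : fstEntry (25 * u + 5 * v + w) = u := by ext; simp [fstEntry]; omega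
      have e₂ : sndEntry (25 * u + 5 * v + w) = v := by ext; simp [sndEntry]; omega
      have e₃ : thdEntry (25 * u + 5 * v + w) = w := by ext; simp [thdEntry]; omega
      have := (testBit_mask (fun x => (q i x : ℕ)) T (25 * u + 5 * v + w)).2
        ⟨by omega, by rw [e₁, e₂, e₃]; exact ⟨h₁, h₂⟩, by rwa [e₁, e₂, e₃]⟩
      change (m i).testBit _ = true at this
      simp [h0] at this
    have k₁ := key ((q i).symm 0) ((q i).symm 1) ((q i).symm 2) (by simp) (by simp)
    have k₂ := key ((q i).symm 0) ((q i).symm 1) ((q i).symm 3) (by simp) (by simp)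
    have : (q i).symm 3 ∈ T := k₂ ▸ by simp
    rw [← k₁] at this
    simp at this
  have hinj : Function.Injective m := by
    intro i j hij
    by_contra hne'
    have := hdisj i j hne'
    rw [hij, Nat.and_self] at this
    exact hne j this
  refine noClique_sound 5 _ (search T) ((Finset.univ.erase 0).image m) ?_ ?_ ?_
  · intro a ha
    obtain ⟨i, hi, rfl⟩ := Finset.mem_image.1 ha
    refine List.mem_filter.2 ⟨List.mem_map.2 ⟨_, orderMask_mem_permMasks (q i), rfl⟩, ?_⟩
    rw [Nat.beq_eq]
    have h0 := hdisj 0 i (Finset.ne_of_mem_erase hi).symm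
    simp only [hm, hq] at h0 ⊢
    -- The identity's own mask need not be cut down to `offMask T`: the other one already is.
    refine Eq.trans ?_ h0
    change (orderMask fun x => (x : ℕ)) &&& (_ &&& _) = _
    refine Nat.eq_of_testBit_eq fun k => ?_
    simp only [Nat.testBit_land, Equiv.Perm.coe_one, id]
    cases (offMask T).testBit k <;> simp
  · rw [Finset.card_image_of_injective _ hinj]; simp
  · intro a ha b hb hab
    obtain ⟨i, -, rfl⟩ := Finset.mem_image.1 ha
    obtain ⟨j, -, rfl⟩ := Finset.mem_image.1 hb
    exact hdisj i j fun e => hab (e ▸ rfl)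

theorem shatteredCount_le_eight (P : Fin 6 → Equiv.Perm (Fin 5)) : shatteredCount P ≤ 8 := by
  by_contra! hP
  have hsum := Finset.card_filter_add_card_filter_not
    (s := (Finset.univ : Finset (Fin 5)).powersetCard 3) (ShattersTriples P)
  rw [Finset.card_powersetCard, Finset.card_univ, Fintype.card_fin,
    show Nat.choose 5 3 = 10 from rfl] at hsum
  unfold shatteredCount at hP
  obtain ⟨T, hT⟩ := Finset.card_le_one_iff_subset_singleton.1
    (show (((Finset.univ : Finset (Fin 5)).powersetCard 3).filter
      (fun X => ¬ ShattersTriples P X)).card ≤ 1 by omega)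
  refine no_family (fun i => (P i).symm * P 0) ?_ (T.map (P 0).symm.toEmbedding) ?_
  · ext; simp
  · intro X hX hXT a ha b hb c hc hab hbc hac
    have hs : ShattersTriples P (X.map (P 0).toEmbedding) := by
      by_contra hns
      have : X.map (P 0).toEmbedding = T := Finset.mem_singleton.1 <| hT <| by
        simp [Finset.mem_powersetCard, hX, hns]
      apply hXT
      rw [← this, Finset.map_map]
      simp
    exact hs (P 0 a) (by simpa using ha) (P 0 b) (by simpa using hb) (P 0 c) (by simpa using hc)
      (by simpa using hab) (by simpa using hbc) (by simpa using hac)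

/-- No 6 permutations of `[5]` shatter 9 or more triples, and the family
`{12345, 35241, 41523, 25143, 53142, 43215}` shatters exactly 8; hence the
maximum is 8. -/
theorem six_perms_of_five_shatter_at_most_eight :
    (∀ P : Fin 6 → Equiv.Perm (Fin 5), shatteredCount P ≤ 8) ∧
    shatteredCount ![p₀, p₁, p₂, p₃, p₄, p₅] = 8 := by
  exact ⟨shatteredCount_le_eight, by decide +kernel⟩
end

section
/- $\mathrm{av}_7(4\Box 132) = 3592$ and $\mathrm{av}_7(3\Box 142) = 3587$; in particular the boxed patterns $4\Box 132$ and $3\Box 142$ are not Wilf-equivalent, even though the classical patterns $4132$ and $3142$ are Wilf-equivalent. -/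
open Finset

/-- `π` contains the boxed pattern `4□132`. -/
def Contains4box132 (π : Equiv.Perm (Fin 7)) : Prop :=
  ∃ x₁ x₂ x₃ x₄ : Fin 7, x₁ < x₂ ∧ x₂ < x₃ ∧ x₃ < x₄ ∧ (x₁ : ℕ) + 1 < (x₂ : ℕ) ∧
    π x₂ < π x₄ ∧ π x₄ < π x₃ ∧ π x₃ < π x₁

/-- `π` contains the boxed pattern `3□142`. -/
def Contains3box142 (π : Equiv.Perm (Fin 7)) : Prop :=
  ∃ x₁ x₂ x₃ x₄ : Fin 7, x₁ < x₂ ∧ x₂ < x₃ ∧ x₃ < x₄ ∧ (x₁ : ℕ) + 1 < (x₂ : ℕ) ∧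
    π x₂ < π x₄ ∧ π x₄ < π x₁ ∧ π x₁ < π x₃

instance : DecidablePred Contains4box132 := by unfold Contains4box132; infer_instance
instance : DecidablePred Contains3box142 := by unfold Contains3box142; infer_instance

/-!
Both counts come from a finite enumeration arranged so that the kernel can carry it out. A
permutation is replaced by its one-line word, a list of natural numbers; the words obtained this
way are exactly the rearrangements of `[0, …, 6]` (`exists_word_eq_iff`), and the boxed patterns
become a Boolean test on words (`boxed_word`). Every rearrangement arises exactly once by inserting
`6, 5, …, 0` successively at arbitrary positions, so the number of avoiders is a sum over the tree
of insertions (`sum_insCount`, `card_filter_word`), which is evaluated by computation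
(`count_4box132`, `count_3box142`).
-/

/-- `exTail P l` holds when some decomposition `l = u ++ x :: t` satisfies `P x t`; nesting it
searches for subsequences of `l`. The bare recursors reduce faster in the kernel than a
definition by pattern matching. -/
def exTail (P : ℕ → List ℕ → Bool) (l : List ℕ) : Bool :=
  List.rec false (fun x t ih => Bool.rec ih true (P x t)) l

theorem exTail_nil (P : ℕ → List ℕ → Bool) : exTail P [] = false := rfl

theorem exTail_cons (P : ℕ → List ℕ → Bool) (x : ℕ) (t : List ℕ) :
    exTail P (x :: t) = (P x t || exTail P t) := by
  cases h : P x t <;> simp [exTail, h]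

/-- Whether the word `l` has a subsequence `a, b, c, d` satisfying `R` in which `a` and `b` are
not adjacent in `l`; dropping the entry just after `a` encodes the box. -/
def boxed (R : ℕ → ℕ → ℕ → ℕ → Bool) (l : List ℕ) : Bool :=
  exTail (fun a t => exTail (fun b t => exTail (fun c t => exTail (fun d _ => R a b c d) t) t)
    t.tail) l

/-- The number, with multiplicity, of words satisfying `p` that arise from `l` by inserting the
entries of the first argument one after the other, each at any position. Summing over this
insertion tree keeps the recursion shallow. -/
def insCount (p : List ℕ → Bool) : List ℕ → List ℕ → ℕ
  | [], l => cond (p l) 1 0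
  | a :: r, l => ((l.permutations'Aux a).map (insCount p r)).sum

theorem sum_insCount (p : List ℕ → Bool) (r s : List ℕ) :
    (s.permutations'.map (insCount p r)).sum = (r.reverse ++ s).permutations'.countP p := by
  induction r generalizing s with
  | nil =>
    simp only [List.reverse_nil, List.nil_append]
    induction s.permutations' with
    | nil => rfl
    | cons l L ih =>
      rw [List.map_cons, List.sum_cons, ih]
      cases h : p l <;> simp [insCount, h, Nat.add_comm]
  | cons a r ih =>
    have h : (r.reverse ++ a :: s) = (a :: r).reverse ++ s := by simp
    rw [← h, ← ih (a :: s)]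
    simp only [List.permutations']
    induction s.permutations' with
    | nil => rfl
    | cons l L ih =>
      rw [List.map_cons, List.sum_cons, ih, List.flatMap_cons, List.map_append, List.sum_append,
        insCount]

/-- One-line notation, with values in `{0, …, 6}`. -/
def word (π : Equiv.Perm (Fin 7)) : List ℕ := List.ofFn fun i => (π i : ℕ)

theorem word_injective : Function.Injective word := by
  intro π σ h
  ext i
  exact congrFun (List.ofFn_injective h) i

theorem exists_word_eq_iff (l : List ℕ) : (∃ π, word π = l) ↔ l.Perm (List.range 7) := by
  constructor
  · rintro ⟨π, rfl⟩
    refine (List.perm_ext_iff_of_nodup ?_ List.nodup_range).2 fun a => ?_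
    · exact List.nodup_ofFn.2 (Fin.val_injective.comp π.injective)
    · simp only [word, List.mem_ofFn, List.mem_range]
      exact ⟨fun ⟨i, hi⟩ => hi ▸ (π i).2, fun h => ⟨π.symm ⟨a, h⟩, by simp⟩⟩
  · intro h
    have hl : l.length = 7 := by simpa using h.length_eq
    have hlt (i : Fin 7) : l[i] < 7 := List.mem_range.1 (h.mem_iff.1 (List.getElem_mem _))
    have hnd : l.Nodup := h.nodup_iff.2 List.nodup_range
    have hinj : Function.Injective fun i : Fin 7 => (⟨l[i], hlt i⟩ : Fin 7) := by
      intro i j hij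
      exact Fin.ext ((hnd.getElem_inj_iff).1 (Fin.mk.inj_iff.1 hij))
    refine ⟨Equiv.ofBijective _ (Finite.injective_iff_bijective.1 hinj), ?_⟩
    apply List.ext_getElem
    · simp [word, hl]
    · intro i _ _
      simp only [word, List.getElem_ofFn]
      rfl

/-- A property of permutations that is a Boolean test `p` on words is counted by the insertion tree
of any `r` listing `6, …, 0`. -/
theorem card_filter_word (q : Equiv.Perm (Fin 7) → Prop) [DecidablePred q] (p : List ℕ → Bool)
    (h : ∀ π, q π ↔ p (word π) = true) (r : List ℕ) (hr : r.reverse = List.range 7) :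
    (Finset.univ.filter q).card = insCount p r [] := by
  have e := sum_insCount p r []
  rw [List.permutations', List.map_singleton, List.sum_singleton, List.append_nil, hr] at e
  have hmem (l : List ℕ) : l ∈ (List.range 7).permutations' ↔ ∃ π, word π = l := by
    rw [List.mem_permutations', exists_word_eq_iff]
  have hnd : (List.range 7).permutations'.Nodup :=
    (List.permutations_perm_permutations' _).nodup_iff.1
      (List.nodup_permutations _ List.nodup_range)
  generalize (List.range 7).permutations' = L at e hmem hnd
  rw [e, List.countP_eq_length_filter, ← List.toFinset_card_of_nodup (hnd.filter _),
    ← Finset.card_image_of_injective _ word_injective]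
  congr 1
  ext l
  simp only [mem_image, mem_filter, mem_univ, true_and, List.mem_toFinset, List.mem_filter,
    hmem, h]
  grind

/-- Both sides unfold to the disjunction over the fifteen admissible position quadruples. -/
theorem boxed_word (R : ℕ → ℕ → ℕ → ℕ → Bool) (π : Equiv.Perm (Fin 7)) :
    boxed R (word π) = true ↔ ∃ x₁ x₂ x₃ x₄ : Fin 7, x₁ < x₂ ∧ x₂ < x₃ ∧ x₃ < x₄ ∧
      (x₁ : ℕ) + 1 < (x₂ : ℕ) ∧ R (π x₁) (π x₂) (π x₃) (π x₄) = true := by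
  generalize hf : (fun i => (π i : ℕ)) = f
  have hf' (i) : (π i : ℕ) = f i := congrFun hf i
  simp only [word, hf']
  simp [boxed, exTail_nil, exTail_cons, List.ofFn_succ, Fin.exists_fin_succ]

theorem count_4box132 : insCount
    (fun l => !boxed (fun a b c d => b.blt d && (d.blt c && c.blt a)) l)
    [6, 5, 4, 3, 2, 1, 0] [] = 3592 := by
  decide +kernel

theorem count_3box142 : insCount
    (fun l => !boxed (fun a b c d => b.blt d && (d.blt a && a.blt c)) l)
    [6, 5, 4, 3, 2, 1, 0] [] = 3587 := by
  decide +kernel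

/-- `av₇(4□132) = 3592 ≠ 3587 = av₇(3□142)`: the two boxed patterns are not
Wilf-equivalent. -/
theorem av7_boxed_patterns :
    ((Finset.univ : Finset (Equiv.Perm (Fin 7))).filter fun π => ¬ Contains4box132 π).card
      = 3592 ∧
    ((Finset.univ : Finset (Equiv.Perm (Fin 7))).filter fun π => ¬ Contains3box142 π).card
      = 3587 := by
  constructor
  · rw [← count_4box132]
    refine card_filter_word _ _ (fun π => ?_) _ rfl
    rw [Bool.not_eq_true', ← Bool.not_eq_true, boxed_word]
    simp [Contains4box132, Nat.blt_eq]
  · rw [← count_3box142]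
    refine card_filter_word _ _ (fun π => ?_) _ rfl
    rw [Bool.not_eq_true', ← Bool.not_eq_true, boxed_word]
    simp [Contains3box142, Nat.blt_eq]
end
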